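/- For λ ≥ 1 and for all z > 0 and w ∈ (−1,1), the functions A_λ, B_λ, C_λ of the series representation of the Clifford–Fourier kernel satisfy the recursions: A_{λ+1}(w,z) = −((λ+1)/λ) z^{−1} ∂_w A_λ(w,z), B_{λ+1}(w,z) = −z^{−1} ∂_w B_λ(w,z), and C_λ(w,z) = −(1/(λ z)) ∂_w A_λ(w,z). -/

import Mathlib

open scoped BigOperators
open MeasureTheory

noncomputable section

namespace CliffordFourier

/-- The Gegenbauer polynomial `C_k^λ(w)`, defined through the standard three-term
recurrence, equivalent to the generating function `(1-2wt+t²)^{-λ} = Σ_k C_k^λ(w) t^k`. -/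
def geg (lam : ℝ) : ℕ → ℝ → ℝ
  | 0, _ => 1
  | 1, w => 2 * lam * w
  | (k+2), w => (2 * ((k : ℝ) + 1 + lam) * w * geg lam (k+1) w
      - ((k : ℝ) + 2 * lam) * geg lam k w) / ((k : ℝ) + 2)

/-- The Bessel function of the first kind
`J_a(z) = Σ_{j≥0} (-1)^j (z/2)^{2j+a} / (j! Γ(j+a+1))`. -/
def besselJ (a z : ℝ) : ℝ :=
  ∑' j : ℕ, ((-1 : ℝ)^j * (z/2) ^ (2*(j:ℝ) + a)) / (j.factorial * Real.Gamma ((j : ℝ) + a + 1))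

/-- `A_λ(w,z) = 2^{λ-1} Γ(λ+1) Σ_{k≥0} (i^{2λ+2} + (-1)^k) z^{-λ} J_{k+λ}(z) C_k^λ(w)`. -/
def Afun (lam w z : ℝ) : ℂ :=
  (((2:ℝ)^(lam - 1) * Real.Gamma (lam + 1) : ℝ) : ℂ) *
    ∑' k : ℕ, (Complex.I ^ ((2*lam + 2 : ℝ) : ℂ) + (-1 : ℂ)^k) *
      ((z ^ (-lam) * besselJ ((k : ℝ) + lam) z * geg lam k w : ℝ) : ℂ)

/-- `B_λ(w,z) = -2^{λ-1} Γ(λ) Σ_{k≥0} (k+λ)(i^{2λ+2} - (-1)^k) z^{-λ} J_{k+λ}(z) C_k^λ(w)`. -/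
def Bfun (lam w z : ℝ) : ℂ :=
  -(((2:ℝ)^(lam - 1) * Real.Gamma lam : ℝ) : ℂ) *
    ∑' k : ℕ, ((k : ℂ) + (lam : ℂ)) * (Complex.I ^ ((2*lam + 2 : ℝ) : ℂ) - (-1 : ℂ)^k) *
      ((z ^ (-lam) * besselJ ((k : ℝ) + lam) z * geg lam k w : ℝ) : ℂ)

/-- `C_λ(w,z) = -2^{λ-1} Γ(λ) Σ_{k≥0} (i^{2λ+2} + (-1)^k) z^{-λ-1} J_{k+λ}(z) (C_k^λ)'(w)`. -/
def Cfun (lam w z : ℝ) : ℂ :=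
  -(((2:ℝ)^(lam - 1) * Real.Gamma lam : ℝ) : ℂ) *
    ∑' k : ℕ, (Complex.I ^ ((2*lam + 2 : ℝ) : ℂ) + (-1 : ℂ)^k) *
      ((z ^ (-lam - 1) * besselJ ((k : ℝ) + lam) z * deriv (geg lam k) w : ℝ) : ℂ)

lemma geg_rec (lam : ℝ) (k : ℕ) (w : ℝ) : ((k:ℝ)+2) * geg lam (k+2) w =
    2 * ((k : ℝ) + 1 + lam) * w * geg lam (k+1) w - ((k : ℝ) + 2 * lam) * geg lam k w := by
  have : (k:ℝ)+2 ≠ 0 := by positivity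
  rw [geg]; field_simp

lemma geg_conn (lam : ℝ) (hl : 0 < lam) (w : ℝ) (n : ℕ) :
    ((n:ℝ)+2+lam) * geg lam (n+2) w = lam * (geg (lam+1) (n+2) w - geg (lam+1) n w) ∧
    ((n:ℝ)+3+lam) * geg lam (n+3) w = lam * (geg (lam+1) (n+3) w - geg (lam+1) (n+1) w) := by
  induction n with
  | zero =>
    constructor
    · simp [geg]; ring
    · simp [geg]; field_simp; ring
  | succ n ih =>
    obtain ⟨h2, h3⟩ := ih
    refine ⟨by convert h3 using 2; push_cast; ring, ?_⟩
    have r1 := geg_rec lam (n+2) w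
    have r2 := geg_rec (lam+1) (n+2) w
    have r3 := geg_rec (lam+1) n w
    push_cast at *
    rw [show n+1+3 = n+2+2 by ring, show n+1+1 = n+2 by ring]
    rw [show n+2+1 = n+3 by ring] at r1 r2
    have p2 : (n:ℝ)+2+lam ≠ 0 := by positivity
    have p4 : (n:ℝ)+4 ≠ 0 := by positivity
    generalize geg lam (n+2+2) w = g4 at *
    generalize geg lam (n+3) w = g3 at *
    generalize geg lam (n+2) w = g2 at *
    generalize geg (lam+1) (n+2+2) w = c4 at *
    generalize geg (lam+1) (n+3) w = c3 at *
    generalize geg (lam+1) (n+2) w = c2 at *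
    generalize geg (lam+1) (n+1) w = c1 at *
    generalize geg (lam+1) n w = c0 at *
    apply mul_left_cancel₀ (mul_ne_zero p4 p2)
    linear_combination ((n:ℝ)+2+lam) * ((n:ℝ)+4+lam) * r1 - lam*((n:ℝ)+2+lam) * r2
      + 2*w*((n:ℝ)+2+lam) * ((n:ℝ)+4+lam) * h3 - ((n:ℝ)+4+lam)*((n:ℝ)+2+2*lam) * h2
      + lam * ((n:ℝ)+4+lam) * r3

lemma geg_deriv (lam : ℝ) (hl : 0 < lam) (w : ℝ) (n : ℕ) :
    HasDerivAt (geg lam (n+1)) (2 * lam * geg (lam+1) n w) w ∧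
    HasDerivAt (geg lam (n+2)) (2 * lam * geg (lam+1) (n+1) w) w := by
  have key : ∀ k : ℕ, ∀ d0 d1 : ℝ, HasDerivAt (geg lam k) d0 w → HasDerivAt (geg lam (k+1)) d1 w →
      HasDerivAt (geg lam (k+2)) ((2 * ((k : ℝ) + 1 + lam) * (geg lam (k+1) w + w * d1)
      - ((k : ℝ) + 2 * lam) * d0) / ((k : ℝ) + 2)) w := by
    intro k d0 d1 h0 h1
    have e : geg lam (k+2) = fun w => (2 * ((k : ℝ) + 1 + lam) * (w * geg lam (k+1) w)
      - ((k : ℝ) + 2 * lam) * geg lam k w) / ((k : ℝ) + 2) := by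
      funext x; rw [geg]; ring
    rw [e]
    have := ((((hasDerivAt_id w).mul h1).const_mul (2 * ((k : ℝ) + 1 + lam))).sub
      (h0.const_mul ((k : ℝ) + 2 * lam))).div_const ((k : ℝ) + 2)
    refine HasDerivAt.congr_deriv this ?_
    simp
  have d0 : HasDerivAt (geg lam 0) 0 w := by
    have e : geg lam 0 = fun _ => 1 := by funext x; rw [geg]
    rw [e]; exact hasDerivAt_const _ _
  have d1 : HasDerivAt (geg lam 1) (2*lam) w := by
    have e : geg lam 1 = fun x => 2 * lam * x := by funext x; rw [geg]
    rw [e]; simpa using (hasDerivAt_id w).const_mul (2*lam)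
  induction n with
  | zero =>
    refine ⟨by simpa [geg] using d1, ?_⟩
    convert key 0 _ _ d0 d1 using 1
    simp [geg]; ring
  | succ n ih =>
    refine ⟨ih.2, ?_⟩
    convert key (n+1) _ _ ih.1 ih.2 using 1
    have c := (geg_conn lam hl w n).1
    have r := geg_rec (lam+1) n w
    push_cast
    have p : (n:ℝ)+1+2 ≠ 0 := by positivity
    rw [eq_div_iff p]
    rw [show n+1+1 = n+2 by ring]
    linear_combination -2*c + 2*lam*r

lemma geg_bound (lam : ℝ) (hl : 0 < lam) (w : ℝ) (hw : |w| ≤ 1) (n : ℕ) :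
    |geg lam n w| ≤ (4*(1+lam))^n ∧ |geg lam (n+1) w| ≤ (4*(1+lam))^(n+1) := by
  induction n with
  | zero =>
    refine ⟨by simp [geg], ?_⟩
    simp only [geg, zero_add, pow_one, abs_mul, abs_two, abs_of_pos hl]
    nlinarith
  | succ n ih =>
    refine ⟨ih.2, ?_⟩
    obtain ⟨h0, h1⟩ := ih
    have p : (0:ℝ) < (n:ℝ)+2 := by positivity
    have hn : (0:ℝ) ≤ n := by positivity
    rw [geg, abs_div, abs_of_pos p, div_le_iff₀ p]
    refine (abs_sub _ _).trans ?_
    rw [abs_mul, abs_mul, abs_mul ((n:ℝ) + 2*lam), abs_of_pos (show 0 < 2 * ((n:ℝ)+1+lam) by positivity),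
      abs_of_pos (show 0 < (n:ℝ)+2*lam by positivity)]
    set M := 4*(1+lam) with hM
    have hM4 : 4 ≤ M := by rw [hM]; linarith
    have hMn : 0 < M^n := by positivity
    have a1 : 2 * ((n:ℝ)+1+lam) * |w| * |geg lam (n+1) w| ≤ 2 * ((n:ℝ)+1+lam) * 1 * M^(n+1) := by
      gcongr
    have a2 : ((n:ℝ)+2*lam) * |geg lam n w| ≤ ((n:ℝ)+2*lam) * M^n := by gcongr
    have a3 : 2 * ((n:ℝ)+1+lam) * M + ((n:ℝ)+2*lam) ≤ M^2 * ((n:ℝ)+2) := by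
      rw [hM]; nlinarith [mul_nonneg hn hl.le, mul_nonneg hn (mul_nonneg hl.le hl.le), mul_pos hl hl]
    calc _ ≤ (2 * ((n:ℝ)+1+lam) * M + ((n:ℝ)+2*lam)) * M^n := by
          rw [pow_succ] at a1; linarith
      _ ≤ (M^2 * ((n:ℝ)+2)) * M^n := by gcongr
      _ = _ := by ring

lemma bessel_bound (lam : ℝ) (hl : 1 ≤ lam) (z : ℝ) (hz : 0 < z) (k : ℕ) :
    |besselJ ((k:ℝ)+lam) z| ≤ ((z/2)^lam * Real.exp ((z/2)^2)) * ((z/2)^k / k.factorial) := by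
  have hs : HasSum (fun j : ℕ => ((z/2)^lam * ((z/2)^k / k.factorial)) * (((z/2)^2)^j / j.factorial))
      (((z/2)^lam * ((z/2)^k / k.factorial)) * Real.exp ((z/2)^2)) := by
    apply HasSum.mul_left
    rw [Real.exp_eq_exp_ℝ]
    exact NormedSpace.expSeries_div_hasSum_exp ((z/2)^2)
  have hz2 : 0 < z/2 := by positivity
  have := tsum_of_norm_bounded (f := fun j : ℕ => ((-1 : ℝ)^j * (z/2) ^ (2*(j:ℝ) + ((k:ℝ)+lam))) /
    (j.factorial * Real.Gamma ((j : ℝ) + ((k:ℝ)+lam) + 1))) hs ?_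
  · rw [besselJ, ← Real.norm_eq_abs]
    refine this.trans (le_of_eq (by ring))
  · intro j
    have hk : (0:ℝ) ≤ k := by positivity
    have hj : (0:ℝ) ≤ j := by positivity
    have hG : (k.factorial : ℝ) ≤ Real.Gamma ((j : ℝ) + ((k:ℝ)+lam) + 1) := by
      calc (k.factorial : ℝ) ≤ ((k+1).factorial : ℝ) := by
            exact_mod_cast Nat.factorial_le (Nat.le_succ k)
        _ = Real.Gamma (((k+1:ℕ):ℝ)+1) := (Real.Gamma_nat_eq_factorial _).symm
        _ ≤ _ := by
            apply Real.Gamma_strictMonoOn_Ici.monotoneOn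
            · simp; linarith
            · simp; linarith
            · push_cast; linarith
    have hkf : (0:ℝ) < k.factorial := by positivity
    have hG0 := hkf.trans_le hG
    have e : (z/2) ^ (2*(j:ℝ) + ((k:ℝ)+lam)) = ((z/2)^2)^j * ((z/2)^k * (z/2)^lam) := by
      rw [Real.rpow_add hz2, Real.rpow_add hz2, Real.rpow_mul hz2.le]
      norm_cast
    rw [norm_div, norm_mul, norm_pow, norm_neg, norm_one, one_pow, one_mul, e, Real.norm_eq_abs,
      Real.norm_eq_abs, abs_of_pos (by positivity), abs_of_pos (by positivity)]
    calc _ ≤ ((z/2)^2)^j * ((z/2)^k * (z/2)^lam) / (j.factorial * k.factorial) := by gcongr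
      _ = _ := by field_simp

lemma series_summable (lam : ℝ) (hl : 1 ≤ lam) (z : ℝ) (hz : 0 < z) (K R : ℝ) :
    Summable (fun k : ℕ => K * (R^k / k.factorial)) :=
  (Real.summable_pow_div_factorial R).mul_left K

lemma geg_deriv_bound (lam : ℝ) (hl : 0 < lam) (w : ℝ) (hw : |w| ≤ 1) (n : ℕ) :
    |deriv (geg lam n) w| ≤ 2 * lam * (4*(2+lam))^n := by
  cases n with
  | zero =>
    have e : geg lam 0 = fun _ => 1 := by funext x; rw [geg]
    rw [e]; simp; positivity
  | succ n =>
    rw [(geg_deriv lam hl w n).1.deriv, abs_mul, abs_of_pos (show 0 < 2*lam by positivity)]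
    have h := (geg_bound (lam+1) (by linarith) w hw n).1
    have h2 : (4*(1+(lam+1)))^n ≤ (4*(2+lam))^(n+1) := by
      rw [show 1+(lam+1) = 2+lam by ring]
      exact pow_le_pow_right₀ (by linarith) (Nat.le_succ n)
    gcongr
    exact h.trans h2

lemma series_deriv (lam : ℝ) (hl : 1 ≤ lam) (z : ℝ) (hz : 0 < z) (w : ℝ)
    (hw : w ∈ Set.Ioo (-1 : ℝ) 1) (c : ℕ → ℂ) (K : ℝ) (hc : ∀ k, ‖c k‖ ≤ K * 2^k) (a : ℝ) :
    HasDerivAt (fun w' => ∑' k : ℕ, c k * ((a * besselJ ((k : ℝ) + lam) z * geg lam k w' : ℝ) : ℂ))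
      (∑' k : ℕ, c k * ((a * besselJ ((k : ℝ) + lam) z * deriv (geg lam k) w : ℝ) : ℂ)) w ∧
    (∑' k : ℕ, c k * ((a * besselJ ((k : ℝ) + lam) z * deriv (geg lam k) w : ℝ) : ℂ)) =
      ∑' k : ℕ, c (k+1) * ((a * besselJ ((k : ℝ) + (lam+1)) z * (2*lam*geg (lam+1) k w) : ℝ) : ℂ) := by
  have l0 : 0 < lam := by linarith
  set E := (z/2)^lam * Real.exp ((z/2)^2) with hE
  have hK : 0 ≤ K := by simpa using (norm_nonneg _).trans (hc 0)
  have hE0 : 0 ≤ E := by positivity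
  have bd : ∀ (D R x : ℝ) (k : ℕ), |x| ≤ D * R^k →
      ‖c k * ((a * besselJ ((k : ℝ) + lam) z * x : ℝ) : ℂ)‖ ≤
        (K * |a| * E * D) * ((2*(z/2)*R)^k / k.factorial) := by
    intro D R x k hx
    rw [norm_mul, Complex.norm_real, Real.norm_eq_abs, abs_mul, abs_mul]
    calc _ ≤ (K*2^k) * (|a| * (E * ((z/2)^k / k.factorial)) * (D*R^k)) := by
          gcongr
          · exact hc k
          · exact bessel_bound lam hl z hz k
      _ = _ := by rw [mul_pow, mul_pow]; ring
  have habs : ∀ y ∈ Set.Ioo (-1:ℝ) 1, |y| ≤ 1 := fun y hy => abs_le.2 ⟨hy.1.le, hy.2.le⟩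
  have bdd : ∀ k : ℕ, ∀ y ∈ Set.Ioo (-1:ℝ) 1,
      ‖c k * ((a * besselJ ((k : ℝ) + lam) z * deriv (geg lam k) y : ℝ) : ℂ)‖ ≤ _ :=
    fun k y hy => bd _ _ _ k (geg_deriv_bound lam l0 y (habs y hy) k)
  have hd : ∀ (k : ℕ) (y : ℝ), HasDerivAt (geg lam k) (deriv (geg lam k) y) y := by
    intro k y
    apply DifferentiableAt.hasDerivAt
    cases k with
    | zero =>
      have e : geg lam 0 = fun _ => 1 := by funext x; rw [geg]
      rw [e]; fun_prop
    | succ n => exact (geg_deriv lam l0 y n).1.differentiableAt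
  refine ⟨?_, ?_⟩
  · refine hasDerivAt_tsum_of_isPreconnected
      (g := fun k y => c k * ((a * besselJ ((k : ℝ) + lam) z * geg lam k y : ℝ) : ℂ))
      (g' := fun k y => c k * ((a * besselJ ((k : ℝ) + lam) z * deriv (geg lam k) y : ℝ) : ℂ))
      (series_summable lam hl z hz _ _) isOpen_Ioo
      isPreconnected_Ioo ?_ bdd hw ?_ hw
    · intro k y hy
      exact (((hd k y).const_mul _).ofReal_comp).const_mul _
    · refine Summable.of_norm_bounded (series_summable lam hl z hz _ _)
        (fun k => bd 1 (4*(1+lam)) _ k ?_)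
      rw [one_mul]
      exact (geg_bound lam l0 w (habs w hw) k).1
  · rw [Summable.tsum_eq_zero_add]
    · have e : geg lam 0 = fun _ => 1 := by funext x; rw [geg]
      rw [e]
      simp only [deriv_const, mul_zero, Complex.ofReal_zero, zero_add]
      refine tsum_congr fun k => ?_
      rw [(geg_deriv lam l0 w k).1.deriv]
      rw [show ((k+1:ℕ):ℝ) + lam = (k:ℝ) + (lam+1) by push_cast; ring]
    · exact Summable.of_norm_bounded (series_summable lam hl z hz _ _) (fun k => bdd k w hw)

lemma I_norm (lam : ℝ) : ‖Complex.I ^ ((2*lam + 2 : ℝ) : ℂ)‖ = 1 := by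
  rw [Complex.norm_cpow_of_ne_zero Complex.I_ne_zero]
  simp

lemma I_shift (lam : ℝ) : Complex.I ^ ((2*(lam+1) + 2 : ℝ) : ℂ) =
    - Complex.I ^ ((2*lam + 2 : ℝ) : ℂ) := by
  rw [show ((2*(lam+1) + 2 : ℝ) : ℂ) = ((2*lam + 2 : ℝ) : ℂ) + (2:ℕ) by push_cast; ring,
    Complex.cpow_add _ _ Complex.I_ne_zero, Complex.cpow_natCast, Complex.I_sq]
  ring

/-- The recursion relations
`A_{λ+1}(w,z) = -((λ+1)/λ) z⁻¹ ∂_w A_λ(w,z)`,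
`B_{λ+1}(w,z) = -z⁻¹ ∂_w B_λ(w,z)`, and
`C_λ(w,z) = -(1/(λz)) ∂_w A_λ(w,z)`. -/
theorem recursions_ABC (lam : ℝ) (hlam : 1 ≤ lam) (z : ℝ) (hz : 0 < z)
    (w : ℝ) (hw : w ∈ Set.Ioo (-1 : ℝ) 1) :
    Afun (lam + 1) w z
      = -(((lam + 1 : ℝ) : ℂ)/(lam : ℂ)) * ((z : ℂ))⁻¹ * deriv (fun w' => Afun lam w' z) w ∧
    Bfun (lam + 1) w z = -((z : ℂ))⁻¹ * deriv (fun w' => Bfun lam w' z) w ∧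
    Cfun lam w z = -(1/((lam : ℂ) * (z : ℂ))) * deriv (fun w' => Afun lam w' z) w := by
  have l0 : 0 < lam := by linarith
  set ι := Complex.I ^ ((2*lam + 2 : ℝ) : ℂ) with hι
  have hιn : ‖ι‖ = 1 := I_norm lam
  have p2 : ∀ k : ℕ, (1:ℝ) ≤ 2^k := fun k => one_le_pow₀ (by norm_num)
  obtain ⟨hA, hA'⟩ := series_deriv lam hlam z hz w hw (fun k => ι + (-1:ℂ)^k) 2 (fun k => by
    refine (norm_add_le _ _).trans ?_
    rw [hιn, norm_pow, norm_neg, norm_one, one_pow]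
    linarith [p2 k]) (z^(-lam))
  obtain ⟨hB, hB'⟩ := series_deriv lam hlam z hz w hw
    (fun k => ((k:ℂ) + (lam:ℂ)) * (ι - (-1:ℂ)^k)) ((1+lam)*2) (fun k => by
    rw [norm_mul]
    have h1 : ‖ι - (-1:ℂ)^k‖ ≤ 2 := by
      refine (norm_sub_le _ _).trans ?_
      rw [hιn, norm_pow, norm_neg, norm_one, one_pow]
      norm_num
    have h2 : ‖(k:ℂ) + (lam:ℂ)‖ ≤ (1+lam) * 2^k := by
      refine (norm_add_le _ _).trans ?_
      rw [Complex.norm_natCast, Complex.norm_real, Real.norm_eq_abs, abs_of_pos l0]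
      have : (k:ℝ) ≤ 2^k := by exact_mod_cast (Nat.lt_two_pow_self).le
      nlinarith [p2 k]
    calc _ ≤ ((1+lam) * 2^k) * 2 := by gcongr
      _ = _ := by ring) (z^(-lam))
  have dA : deriv (fun w' => Afun lam w' z) w = _ :=
    (hA.const_mul (((2:ℝ)^(lam - 1) * Real.Gamma (lam + 1) : ℝ) : ℂ)).deriv
  have dB : deriv (fun w' => Bfun lam w' z) w = _ :=
    (hB.const_mul (-(((2:ℝ)^(lam - 1) * Real.Gamma lam : ℝ) : ℂ))).deriv
  have hzC : (z:ℂ) ≠ 0 := by exact_mod_cast hz.ne'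
  have hlC : (lam:ℂ) ≠ 0 := by exact_mod_cast l0.ne'
  have hG1 : Real.Gamma (lam+1) = lam * Real.Gamma lam := Real.Gamma_add_one l0.ne'
  have hG2 : Real.Gamma (lam+1+1) = (lam+1) * Real.Gamma (lam+1) :=
    Real.Gamma_add_one (by positivity)
  have h2 : (2:ℝ)^(lam+1-1) = 2 * 2^(lam-1) := by
    rw [show lam+1-1 = 1 + (lam-1) by ring, Real.rpow_add two_pos, Real.rpow_one]
  have hzp : z^(-(lam+1)) = z⁻¹ * z^(-lam) := by
    rw [show -(lam+1) = -1 + -lam by ring, Real.rpow_add hz, Real.rpow_neg_one]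
  have hzp' : z^(-lam-1) = z⁻¹ * z^(-lam) := by
    rw [show -lam-1 = -1 + -lam by ring, Real.rpow_add hz, Real.rpow_neg_one]
  refine ⟨?_, ?_, ?_⟩
  · rw [dA, hA', Afun, I_shift, ← hι, hG2, h2, hzp]
    rw [← tsum_mul_left, ← tsum_mul_left, ← tsum_mul_left]
    refine tsum_congr fun k => ?_
    push_cast
    field_simp
    ring
  · rw [dB, hB', Bfun, I_shift, ← hι, hG1, h2, hzp]
    rw [← tsum_mul_left, ← tsum_mul_left, ← tsum_mul_left]
    refine tsum_congr fun k => ?_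
    push_cast
    field_simp
    ring
  · rw [dA, Cfun, ← hι, hG1, hzp']
    rw [← tsum_mul_left, ← tsum_mul_left, ← tsum_mul_left]
    refine tsum_congr fun k => ?_
    push_cast
    field_simp

end CliffordFourier
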